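/- For i = 1,2 let Λᵢ be an integral domain and commutative ℂ-algebra with Lᵢ = Frac(Λᵢ), and Ŵᵢ a group of ℂ-algebra automorphisms of Λᵢ. Assume Λ = Λ₁ ⊗_ℂ Λ₂ is an integral domain, let L = Frac(Λ), let Ŵ = Ŵ₁ × Ŵ₂ act on Λ componentwise, and let ι: L₁ ⊗_ℂ L₂ → L denote the canonical injection. Then the ℂ-linear map ψ: (L₁#Ŵ₁) ⊗_ℂ (L₂#Ŵ₂) → L#Ŵ determined by ψ((m_f∘w₁) ⊗ (m_g∘w₂)) = m_{ι(f⊗g)}∘(w₁,w₂) is an injective ℂ-algebra homomorphism, and ψ maps 𝓕_{Λ₁} ⊗_ℂ 𝓕_{Λ₂} into the standard flag order 𝓕_Λ; in particular 𝓕_{Λ₁} ⊗_ℂ 𝓕_{Λ₂} embeds into 𝓕_Λ as ℂ-algebras. -/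

import Mathlib

/-!
Statement 10: For fraction-field data (Λᵢ ⊆ Lᵢ, Ŵᵢ a group of automorphisms of Λᵢ extended
to Lᵢ) with Λ = Λ₁ ⊗_ℂ Λ₂ a domain, L = Frac(Λ), ι : L₁ ⊗_ℂ L₂ → L the canonical injection
and Ŵ = Ŵ₁ × Ŵ₂ acting componentwise (via the extension homomorphism `ext`, determined by
`ext p (ι₁ f · ι₂ g) = ι₁(p₁ f) · ι₂(p₂ g)`), the ℂ-linear map
ψ((m_f∘w₁) ⊗ (m_g∘w₂)) = m_{ι(f⊗g)} ∘ (w₁,w₂) is an injective ℂ-algebra homomorphism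
(L₁#Ŵ₁) ⊗_ℂ (L₂#Ŵ₂) → L#Ŵ mapping 𝓕_{Λ₁} ⊗_ℂ 𝓕_{Λ₂} into 𝓕_Λ.

Here Λ = Λ₁ ⊗_ℂ Λ₂ is realized as the ℂ-subalgebra of L generated by ι₁(Λ₁) ∪ ι₂(Λ₂)
("Λ₁ ⊗ Λ₂ is a domain" being encoded by the injectivity of the canonical map
L₁ ⊗_ℂ L₂ → L, and "L = Frac(Λ)" by the hypothesis `hfrac`).
-/

set_option synthInstance.maxHeartbeats 1000000
set_option maxHeartbeats 1000000

open scoped TensorProduct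

noncomputable section

/-- `gen f w` is the ℂ-linear endomorphism `m_f ∘ w` of `L`. -/
def gen {L : Type*} [Field L] [Algebra ℂ L] (f : L) (w : L ≃ₐ[ℂ] L) : Module.End ℂ L :=
  (LinearMap.mulLeft ℂ f) ∘ₗ (w.toLinearMap)

/-- The skew monoid ring `L # W` realized inside `End_ℂ(L)`. -/
def skew {L : Type*} [Field L] [Algebra ℂ L] (W : Submonoid (L ≃ₐ[ℂ] L)) :
    Subalgebra ℂ (Module.End ℂ L) :=
  Algebra.adjoin ℂ { X | ∃ (f : L) (w : L ≃ₐ[ℂ] L), w ∈ W ∧ X = gen f w }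

lemma gen_mem_skew {L : Type*} [Field L] [Algebra ℂ L] {W : Submonoid (L ≃ₐ[ℂ] L)}
    (f : L) {w : L ≃ₐ[ℂ] L} (hw : w ∈ W) : gen f w ∈ skew W :=
  Algebra.subset_adjoin ⟨f, w, hw, rfl⟩

/-- The standard flag order `𝓕_Λ = {X ∈ L#W : X(Λ) ⊆ Λ}`. -/
def flag {L : Type*} [Field L] [Algebra ℂ L] (Λ : Subalgebra ℂ L)
    (W : Submonoid (L ≃ₐ[ℂ] L)) : Set (Module.End ℂ L) :=
  { X | X ∈ skew W ∧ ∀ a ∈ Λ, X a ∈ Λ }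

/-- `Λ = Λ₁ ⊗ Λ₂`, realized inside `L` as the subalgebra generated by `ι₁(Λ₁) ∪ ι₂(Λ₂)`. -/
def tensorSub {L₁ L₂ L : Type*} [Field L₁] [Algebra ℂ L₁] [Field L₂] [Algebra ℂ L₂]
    [Field L] [Algebra ℂ L] (Λ₁ : Subalgebra ℂ L₁) (Λ₂ : Subalgebra ℂ L₂)
    (ι₁ : L₁ →ₐ[ℂ] L) (ι₂ : L₂ →ₐ[ℂ] L) : Subalgebra ℂ L :=
  Algebra.adjoin ℂ ((ι₁ '' (Λ₁ : Set L₁)) ∪ (ι₂ '' (Λ₂ : Set L₂)))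

lemma gen_apply {L : Type*} [Field L] [Algebra ℂ L] (f : L) (w : L ≃ₐ[ℂ] L) (x : L) :
    gen f w x = f * w x :=
  rfl

lemma gen_one_one {L : Type*} [Field L] [Algebra ℂ L] : gen (1 : L) 1 = 1 := by
  ext x
  simp [gen_apply]

lemma gen_mul_gen {L : Type*} [Field L] [Algebra ℂ L] (f g : L) (v w : L ≃ₐ[ℂ] L) :
    gen f v * gen g w = gen (f * v g) (v * w) := by
  ext x
  simp [gen_apply, mul_assoc]

/-- Elements of a skew monoid ring are `L`-linear combinations of automorphisms. -/
lemma mem_span_of_mem_skew {L : Type*} [Field L] [Algebra ℂ L] (W : Submonoid (L ≃ₐ[ℂ] L))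
    {X : Module.End ℂ L} (hX : X ∈ skew W) :
    X ∈ Submodule.span L (Set.range fun w : L ≃ₐ[ℂ] L ↦ (w.toLinearMap : L →ₗ[ℂ] L)) := by
  rw [skew, ← Subalgebra.mem_toSubmodule, Algebra.adjoin_eq_span] at hX
  refine Submodule.span_le (p := (Submodule.span L _).restrictScalars ℂ) |>.mpr ?_ hX
  intro Y hY
  obtain ⟨f, w, rfl⟩ : ∃ f w, Y = gen f w := by
    induction hY using Submonoid.closure_induction with
    | mem Y hY =>
      obtain ⟨f, w, -, rfl⟩ := hY
      exact ⟨f, w, rfl⟩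
    | one => exact ⟨1, 1, gen_one_one.symm⟩
    | mul Y Z _ _ hY hZ =>
      obtain ⟨f, v, rfl⟩ := hY
      obtain ⟨g, w, rfl⟩ := hZ
      exact ⟨_, _, gen_mul_gen f g v w⟩
  exact Submodule.smul_mem _ f (Submodule.subset_span ⟨w, rfl⟩)

/-- If automorphisms of `L` are determined by their restrictions along `ι : R → L`, then so are
the elements of a skew monoid ring over `L`. -/
lemma eq_of_mem_skew_of_comp_eq {L R : Type*} [Field L] [Algebra ℂ L] [CommRing R] [Algebra ℂ R]
    (ι : R →ₐ[ℂ] L)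
    (hι : ∀ v w : L ≃ₐ[ℂ] L, (∀ r, v (ι r) = w (ι r)) → v = w)
    {W : Submonoid (L ≃ₐ[ℂ] L)} {X Y : Module.End ℂ L} (hX : X ∈ skew W) (hY : Y ∈ skew W)
    (h : ∀ r, X (ι r) = Y (ι r)) : X = Y := by
  let restr : (L →ₗ[ℂ] L) →ₗ[L] (R → L) :=
    { toFun := fun Z r ↦ Z (ι r)
      map_add' := fun _ _ ↦ rfl
      map_smul' := fun _ _ ↦ rfl }
  let res : (L ≃ₐ[ℂ] L) → (R →* L) := fun w ↦ ((w : L →ₐ[ℂ] L).comp ι : R →* L)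
  have hres : Function.Injective res := fun v w hvw ↦
    hι v w fun r ↦ DFunLike.congr_fun hvw r
  have hind : LinearIndependent L
      (restr ∘ fun w : L ≃ₐ[ℂ] L ↦ (w.toLinearMap : L →ₗ[ℂ] L)) :=
    (linearIndependent_monoidHom R L).comp res hres
  exact sub_eq_zero.mp <| Submodule.disjoint_def.mp (Submodule.range_ker_disjoint hind) (X - Y)
    (mem_span_of_mem_skew W (sub_mem hX hY))
    (LinearMap.mem_ker.mpr <| funext fun r ↦ sub_eq_zero.mpr (h r))

/-- Over a field, `End M ⊗ End N → End (M ⊗ N)` is injective. -/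
lemma endTensorEndAlgHom_injective (K M N : Type*) [Field K] [AddCommGroup M] [Module K M]
    [AddCommGroup N] [Module K N] :
    Function.Injective
      (Module.endTensorEndAlgHom (R := K) (S := K) (A := K) (M := M) (N := N)) := by
  rw [injective_iff_map_eq_zero]
  intro t ht
  let b := Module.Basis.ofVectorSpace K (Module.End K N)
  obtain ⟨a, rfl⟩ := TensorProduct.eq_repr_basis_right b t
  suffices ha : a = 0 by simp [ha]
  ext j m
  refine (Module.forall_dual_apply_eq_zero_iff K _).mp fun φ ↦ ?_
  have hsum : (Finsupp.linearCombination K b)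
      (a.mapRange (fun c ↦ φ (c m)) (by simp)) = 0 := by
    ext n
    have hmn := congrArg (TensorProduct.lid K N ∘ TensorProduct.map φ LinearMap.id)
      (LinearMap.congr_fun ht (m ⊗ₜ[K] n))
    rw [Finsupp.linearCombination_apply, Finsupp.sum_mapRange_index (by simp)]
    simpa [Finsupp.sum, LinearMap.sum_apply, Module.endTensorEndAlgHom_apply] using hmn
  have := DFunLike.congr_fun
    ((linearIndependent_iff.mp b.linearIndependent) _ hsum) j
  simpa using this

lemma tensorSub_eq_range {L₁ L₂ L : Type*} [Field L₁] [Algebra ℂ L₁] [Field L₂] [Algebra ℂ L₂]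
    [Field L] [Algebra ℂ L] (Λ₁ : Subalgebra ℂ L₁) (Λ₂ : Subalgebra ℂ L₂)
    (ι₁ : L₁ →ₐ[ℂ] L) (ι₂ : L₂ →ₐ[ℂ] L) :
    tensorSub Λ₁ Λ₂ ι₁ ι₂ =
      (Algebra.TensorProduct.productMap (ι₁.comp Λ₁.val) (ι₂.comp Λ₂.val)).range := by
  rw [Algebra.TensorProduct.productMap_range, tensorSub, Algebra.adjoin_union,
    AlgHom.range_comp, AlgHom.range_comp, Subalgebra.range_val, Subalgebra.range_val,
    ← Subalgebra.coe_map, ← Subalgebra.coe_map, Algebra.adjoin_eq, Algebra.adjoin_eq]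

/-- The endomorphisms of `R` that extend along `ι : R → L` to an element of `B`. -/
def extendable {L R : Type*} [Field L] [Algebra ℂ L] [CommRing R] [Algebra ℂ R]
    (ι : R →ₐ[ℂ] L) (B : Subalgebra ℂ (Module.End ℂ L)) : Subalgebra ℂ (Module.End ℂ R) where
  carrier := { Y | ∃ X ∈ B, ∀ r, X (ι r) = ι (Y r) }
  mul_mem' := by
    rintro Y Y' ⟨X, hX, h⟩ ⟨X', hX', h'⟩
    exact ⟨X * X', mul_mem hX hX', fun r ↦ by simp [h, h']⟩
  add_mem' := by
    rintro Y Y' ⟨X, hX, h⟩ ⟨X', hX', h'⟩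
    exact ⟨X + X', add_mem hX hX', fun r ↦ by simp [h, h']⟩
  algebraMap_mem' := fun c ↦
    ⟨algebraMap ℂ _ c, B.algebraMap_mem c, fun r ↦ by simp [Module.algebraMap_end_apply]⟩

theorem tensor_embedding_of_standard_flag_orders
    {L₁ L₂ L : Type*} [Field L₁] [Algebra ℂ L₁] [Field L₂] [Algebra ℂ L₂]
    [Field L] [Algebra ℂ L]
    (Λ₁ : Subalgebra ℂ L₁) (Λ₂ : Subalgebra ℂ L₂)
    [IsFractionRing Λ₁ L₁] [IsFractionRing Λ₂ L₂]
    (W₁ : Subgroup (L₁ ≃ₐ[ℂ] L₁)) (W₂ : Subgroup (L₂ ≃ₐ[ℂ] L₂))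
    (hW₁ : ∀ w ∈ W₁, ∀ x : L₁, x ∈ Λ₁ ↔ w x ∈ Λ₁)
    (hW₂ : ∀ w ∈ W₂, ∀ x : L₂, x ∈ Λ₂ ↔ w x ∈ Λ₂)
    (ι₁ : L₁ →ₐ[ℂ] L) (ι₂ : L₂ →ₐ[ℂ] L)
    -- ι : L₁ ⊗ L₂ → L is injective (equivalently Λ₁ ⊗ Λ₂ is a domain with Frac = L)
    (hι : Function.Injective (Algebra.TensorProduct.productMap ι₁ ι₂))
    -- L is the fraction field of Λ = ι(Λ₁ ⊗ Λ₂)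
    (hfrac : ∀ x : L, ∃ a ∈ tensorSub Λ₁ Λ₂ ι₁ ι₂, ∃ b ∈ tensorSub Λ₁ Λ₂ ι₁ ι₂,
      b ≠ 0 ∧ x = a / b)
    -- the componentwise action of Ŵ₁ × Ŵ₂ on L
    (ext : ((L₁ ≃ₐ[ℂ] L₁) × (L₂ ≃ₐ[ℂ] L₂)) →* (L ≃ₐ[ℂ] L))
    (hext : ∀ (p : (L₁ ≃ₐ[ℂ] L₁) × (L₂ ≃ₐ[ℂ] L₂)) (f : L₁) (g : L₂),
      ext p (ι₁ f * ι₂ g) = ι₁ (p.1 f) * ι₂ (p.2 g)) :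
    ∃ ψ : (↥(skew W₁.toSubmonoid) ⊗[ℂ] ↥(skew W₂.toSubmonoid)) →ₐ[ℂ] Module.End ℂ L,
      -- ψ is determined by ψ((m_f∘w₁) ⊗ (m_g∘w₂)) = m_{ι(f⊗g)} ∘ (w₁,w₂)
      (∀ (f : L₁) (g : L₂) (w₁ : L₁ ≃ₐ[ℂ] L₁) (w₂ : L₂ ≃ₐ[ℂ] L₂)
          (h₁ : w₁ ∈ W₁) (h₂ : w₂ ∈ W₂),
        ψ (⟨gen f w₁, gen_mem_skew f h₁⟩ ⊗ₜ[ℂ] ⟨gen g w₂, gen_mem_skew g h₂⟩)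
          = gen (ι₁ f * ι₂ g) (ext (w₁, w₂))) ∧
      -- ψ is injective
      Function.Injective ψ ∧
      -- ψ takes values in L#(Ŵ₁ × Ŵ₂)
      (∀ t, ψ t ∈ skew (Submonoid.map ext (W₁.toSubmonoid.prod W₂.toSubmonoid))) ∧
      -- ψ maps 𝓕_{Λ₁} ⊗ 𝓕_{Λ₂} into 𝓕_Λ
      (∀ (X₁ : skew W₁.toSubmonoid) (X₂ : skew W₂.toSubmonoid),
        (X₁ : Module.End ℂ L₁) ∈ flag Λ₁ W₁.toSubmonoid →
        (X₂ : Module.End ℂ L₂) ∈ flag Λ₂ W₂.toSubmonoid →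
        ∀ a ∈ tensorSub Λ₁ Λ₂ ι₁ ι₂, ψ (X₁ ⊗ₜ[ℂ] X₂) a ∈ tensorSub Λ₁ Λ₂ ι₁ ι₂) := by
  let ι := Algebra.TensorProduct.productMap ι₁ ι₂
  let B := skew (Submonoid.map ext (W₁.toSubmonoid.prod W₂.toSubmonoid))
  have hgen : ∀ f g w₁ w₂, w₁ ∈ W₁ → w₂ ∈ W₂ → gen (ι₁ f * ι₂ g) (ext (w₁, w₂)) ∈ B :=
    fun f g w₁ w₂ h₁ h₂ ↦ gen_mem_skew _ ⟨(w₁, w₂), ⟨h₁, h₂⟩, rfl⟩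
  have hgen_apply : ∀ f g w₁ w₂ r, gen (ι₁ f * ι₂ g) (ext (w₁, w₂)) (ι r) =
      ι (TensorProduct.map (gen f w₁) (gen g w₂) r) := by
    intro f g w₁ w₂ r
    induction r with
    | zero => simp
    | add x y hx hy => simp only [map_add, hx, hy]
    | tmul x y => simp [ι, gen_apply, hext, mul_mul_mul_comm]
  have hsub : ∀ a ∈ tensorSub Λ₁ Λ₂ ι₁ ι₂, ∃ r : Λ₁ ⊗[ℂ] Λ₂,
      ι (Algebra.TensorProduct.map Λ₁.val Λ₂.val r) = a := by
    intro a ha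
    rw [tensorSub_eq_range] at ha
    obtain ⟨r, rfl⟩ := ha
    exact ⟨r, DFunLike.congr_fun (Algebra.TensorProduct.ext' (by simp [ι]) :
      ι.comp (Algebra.TensorProduct.map Λ₁.val Λ₂.val) = _) r⟩
  have huniq : ∀ v w : L ≃ₐ[ℂ] L, (∀ r, v (ι r) = w (ι r)) → v = w := by
    intro v w h
    ext x
    obtain ⟨a, ha, b, hb, -, rfl⟩ := hfrac x
    obtain ⟨r, rfl⟩ := hsub a ha
    obtain ⟨s, rfl⟩ := hsub b hb
    simp only [map_div₀, h]
  let Ψ : skew W₁.toSubmonoid ⊗[ℂ] skew W₂.toSubmonoid →ₐ[ℂ] Module.End ℂ (L₁ ⊗[ℂ] L₂) :=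
    (Module.endTensorEndAlgHom (R := ℂ) (S := ℂ) (A := ℂ) (M := L₁) (N := L₂)).comp
      (Algebra.TensorProduct.map (skew W₁.toSubmonoid).val (skew W₂.toSubmonoid).val)
  have hΨ_tmul : ∀ X₁ X₂, Ψ (X₁ ⊗ₜ X₂) = TensorProduct.map X₁.1 X₂.1 := fun _ _ ↦ rfl
  have : Module.Flat ℂ (skew W₂.toSubmonoid) :=
    @Module.Flat.of_free _ _ _ _ _ (Module.Free.of_divisionRing ℂ (skew W₂.toSubmonoid))
  have hΨ_inj : Function.Injective Ψ :=
    (endTensorEndAlgHom_injective ℂ L₁ L₂).comp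
      (TensorProduct.map_injective_of_flat_flat (skew W₁.toSubmonoid).val.toLinearMap
        (skew W₂.toSubmonoid).val.toLinearMap Subtype.val_injective Subtype.val_injective)
  have hleft : skew W₁.toSubmonoid ≤ (extendable ι B).comap
      ((Module.endTensorEndAlgHom (R := ℂ) (S := ℂ) (A := ℂ) (M := L₁) (N := L₂)).comp
        Algebra.TensorProduct.includeLeft) := by
    refine Algebra.adjoin_le ?_
    rintro _ ⟨f, w, hw, rfl⟩
    refine ⟨_, hgen f 1 w 1 hw (one_mem _), fun r ↦ ?_⟩
    rw [hgen_apply, gen_one_one]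
    rfl
  have hright : skew W₂.toSubmonoid ≤ (extendable ι B).comap
      ((Module.endTensorEndAlgHom (R := ℂ) (S := ℂ) (A := ℂ) (M := L₁) (N := L₂)).comp
        Algebra.TensorProduct.includeRight) := by
    refine Algebra.adjoin_le ?_
    rintro _ ⟨g, w, hw, rfl⟩
    refine ⟨_, hgen 1 g 1 w (one_mem _) hw, fun r ↦ ?_⟩
    rw [hgen_apply, gen_one_one]
    rfl
  have hΨ_mem : ∀ t, Ψ t ∈ extendable ι B := by
    intro t
    induction t with
    | zero => simp
    | add x y hx hy => rw [map_add]; exact add_mem hx hy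
    | tmul X₁ X₂ =>
      have h := mul_mem (S := Subalgebra ℂ _) ((Subalgebra.mem_comap _ _ _).mp (hleft X₁.2))
        ((Subalgebra.mem_comap _ _ _).mp (hright X₂.2))
      convert! h using 1
      rw [hΨ_tmul]
      ext x y
      simp [Module.endTensorEndAlgHom_apply]
  choose ψ hψ_mem hψ using hΨ_mem
  have hψ_eq : ∀ t, ∀ X ∈ B, (∀ r, X (ι r) = ι (Ψ t r)) → ψ t = X := fun t X hX h ↦
    eq_of_mem_skew_of_comp_eq ι huniq (hψ_mem t) hX fun r ↦ (hψ t r).trans (h r).symm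
  let ψHom : skew W₁.toSubmonoid ⊗[ℂ] skew W₂.toSubmonoid →ₐ[ℂ] Module.End ℂ L :=
    { toFun := ψ
      map_one' := hψ_eq _ _ (one_mem _) fun r ↦ by simp
      map_mul' := fun s t ↦ hψ_eq _ _ (mul_mem (hψ_mem s) (hψ_mem t)) fun r ↦ by simp [hψ]
      map_zero' := hψ_eq _ _ (zero_mem _) fun r ↦ by simp
      map_add' := fun s t ↦ hψ_eq _ _ (add_mem (hψ_mem s) (hψ_mem t)) fun r ↦ by simp [hψ]
      commutes' := fun c ↦ hψ_eq _ _ (B.algebraMap_mem c) fun r ↦ by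
        rw [AlgHom.commutes]; simp [Module.algebraMap_end_apply] }
  refine ⟨ψHom, ?_, ?_, hψ_mem, ?_⟩
  · intro f g w₁ w₂ h₁ h₂
    exact hψ_eq _ _ (hgen f g w₁ w₂ h₁ h₂) (hgen_apply f g w₁ w₂)
  · intro s t hst
    refine hΨ_inj (LinearMap.ext fun r ↦ hι ?_)
    exact (hψ s r).symm.trans ((LinearMap.congr_fun hst (ι r)).trans (hψ t r))
  · intro X₁ X₂ hX₁ hX₂ a ha
    obtain ⟨r, rfl⟩ := hsub a ha
    change ψ _ _ ∈ _
    rw [hψ, hΨ_tmul]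
    clear ha
    induction r with
    | zero => simp
    | add x y hx hy => simpa only [map_add] using add_mem hx hy
    | tmul x y =>
      have h₁ : ι₁ (X₁.1 x) ∈ tensorSub Λ₁ Λ₂ ι₁ ι₂ :=
        Algebra.subset_adjoin (.inl ⟨_, hX₁.2 x x.2, rfl⟩)
      have h₂ : ι₂ (X₂.1 y) ∈ tensorSub Λ₁ Λ₂ ι₁ ι₂ :=
        Algebra.subset_adjoin (.inr ⟨_, hX₂.2 y y.2, rfl⟩)
      simpa [ι] using mul_mem h₁ h₂
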